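/- If A and B are disjoint Borel subsets of C, then μ(A ∪ B) = μ(A) + μ(B). -/

import Mathlib

open MeasureTheory Matrix Set Filter Topology
open scoped ENNReal

noncomputable section

/-- The space `C` of continuous functions on `[0,1]` vanishing at `0`,
with the supremum metric (inherited from `C([0,1], ℝ)`). -/
abbrev Cz : Type := {f : C(Set.Icc (0:ℝ) 1, ℝ) // f ⟨0, ⟨le_refl 0, zero_le_one⟩⟩ = 0}

/-- The projection `π_n : C → ℝ^n`, `x ↦ (x(t_1), …, x(t_n))`. -/
def proj (t : ℕ → ℝ) (ht : ∀ k, t k ∈ Set.Ioc (0:ℝ) 1) (n : ℕ) (x : Cz) : Fin n → ℝ :=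
  fun i => (x : C(Set.Icc (0:ℝ) 1, ℝ)) ⟨t i, Set.Ioc_subset_Icc_self (ht i)⟩

/-- The covariance matrix `M_n` with entries `min (t j) (t r)`. -/
def covM (t : ℕ → ℝ) (n : ℕ) : Matrix (Fin n) (Fin n) ℝ :=
  Matrix.of fun j r => min (t (j : ℕ)) (t (r : ℕ))

/-- The centered Gaussian measure on `ℝ^n` with (positive definite) covariance matrix `M`:
the measure with density `u ↦ ((2π)^n det M)^{-1/2} exp (-⟨u, M⁻¹ u⟩ / 2)` w.r.t. Lebesgue
measure. -/
def gauss (n : ℕ) (M : Matrix (Fin n) (Fin n) ℝ) : Measure (Fin n → ℝ) :=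
  volume.withDensity fun u =>
    ENNReal.ofReal ((((2 * Real.pi) ^ n * M.det) ^ (-(1:ℝ)/2 : ℝ)) *
      Real.exp (-(u ⬝ᵥ M⁻¹.mulVec u) / 2))

/-- `φ(K) = inf_{n ≥ 1} ν_n (π_n(K))`. -/
def phi (t : ℕ → ℝ) (ht : ∀ k, t k ∈ Set.Ioc (0:ℝ) 1) (K : Set Cz) : ℝ≥0∞ :=
  ⨅ n : ℕ, gauss (n+1) (covM t (n+1)) (proj t ht (n+1) '' K)

/-- `μ(A) = sup {φ(K) : K ⊆ A, K compact}`. -/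
def mu (t : ℕ → ℝ) (ht : ∀ k, t k ∈ Set.Ioc (0:ℝ) 1) (A : Set Cz) : ℝ≥0∞ :=
  ⨆ (K : Set Cz) (_ : K ⊆ A) (_ : IsCompact K), phi t ht K

instance : MeasurableSpace Cz := borel Cz
instance : BorelSpace Cz := ⟨rfl⟩

/-!
The matrix `min (t j) (t r)` is the Gram matrix of the indicators of `(0, t k]` in `L²(ℝ)`, so
Gram–Schmidt exhibits all the measures `ν_n` as marginals of one law `P` on `ℝ^ℕ`, the image of an
i.i.d. standard Gaussian sequence under a triangular map. For compact `K`, the image of `K` under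
`x ↦ (x (t k))ₖ` is closed, hence the decreasing intersection of the cylinders over its
finite-dimensional projections; therefore `φ K` is the `P`-measure of that image. Since the times
are dense, sampling is injective, hence a Borel embedding by Lusin–Souslin, and `P` pulls back to a
finite Borel measure on the Polish space `C`. Inner regularity identifies this measure with `μ` on
Borel sets.
-/

section Cylinders

variable {Y : Type*}

/-- The first `n` coordinates of a sequence. -/
def truncate (n : ℕ) (y : ℕ → Y) : Fin n → Y := fun i => y i

/-- The cylinder over the first `n` coordinates generated by a set of sequences. -/
def cylinderHull (n : ℕ) (S : Set (ℕ → Y)) : Set (ℕ → Y) := truncate n ⁻¹' (truncate n '' S)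

lemma antitone_cylinderHull (S : Set (ℕ → Y)) : Antitone fun n => cylinderHull n S := by
  rintro m n hmn y ⟨z, hzS, hzy⟩
  exact ⟨z, hzS, funext fun i => congrFun hzy (i.castLE hmn)⟩

variable [TopologicalSpace Y]

lemma continuous_truncate (n : ℕ) : Continuous (truncate n : (ℕ → Y) → Fin n → Y) :=
  continuous_pi fun i => continuous_apply (i : ℕ)

lemma iInter_cylinderHull_of_isClosed {S : Set (ℕ → Y)} (hS : IsClosed S) :
    ⋂ n, cylinderHull n S = S := by
  refine Subset.antisymm (fun y hy => ?_) (subset_iInter fun n => subset_preimage_image _ S)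
  choose z hzS hzy using mem_iInter.1 hy
  have hz : Tendsto z atTop (𝓝 y) := tendsto_pi_nhds.2 fun i =>
    tendsto_const_nhds.congr' <| (eventually_gt_atTop i).mono fun n hin =>
      (congrFun (hzy n) ⟨i, hin⟩).symm
  exact hS.mem_of_tendsto hz (Eventually.of_forall hzS)

variable [T2Space Y] [SecondCountableTopology Y] [MeasurableSpace Y] [BorelSpace Y]

lemma iInf_map_truncate_image_of_isCompact (P : Measure (ℕ → Y)) [IsFiniteMeasure P]
    {S : Set (ℕ → Y)} (hS : IsCompact S) :
    ⨅ n, P.map (truncate (n + 1)) (truncate (n + 1) '' S) = P S := by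
  have htrunc (n : ℕ) : Measurable (truncate n : (ℕ → Y) → Fin n → Y) :=
    (continuous_truncate n).measurable
  have hmeas (n : ℕ) : MeasurableSet (truncate n '' S) :=
    (hS.image (continuous_truncate n)).measurableSet
  have hanti : Antitone fun n => P (cylinderHull n S) :=
    fun _ _ h => measure_mono (antitone_cylinderHull S h)
  calc ⨅ n, P.map (truncate (n + 1)) (truncate (n + 1) '' S)
      = ⨅ n, P (cylinderHull (n + 1) S) :=
        iInf_congr fun n => Measure.map_apply (htrunc _) (hmeas _)
    _ = ⨅ n, P (cylinderHull n S) := hanti.iInf_nat_add 1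
    _ = P (⋂ n, cylinderHull n S) :=
        ((antitone_cylinderHull S).measure_iInter
          (fun n => (htrunc n (hmeas n)).nullMeasurableSet) ⟨0, measure_ne_top _ _⟩).symm
    _ = P S := by rw [iInter_cylinderHull_of_isClosed hS.isClosed]

end Cylinders

section Densities

lemma map_withDensity_comp {α β : Type*} [MeasurableSpace α] [MeasurableSpace β] (μ : Measure α)
    {f : α → β} (hf : Measurable f) {g : β → ℝ≥0∞} (hg : Measurable g) :
    (μ.withDensity (g ∘ f)).map f = (μ.map f).withDensity g := by
  ext s hs
  rw [Measure.map_apply hf hs, withDensity_apply _ (hf hs), withDensity_apply _ hs,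
    setLIntegral_map hs hg hf]
  rfl

lemma pi_withDensity_ofReal {ι : Type*} [Fintype ι] {α : ι → Type*} [∀ i, MeasurableSpace (α i)]
    {μ : ∀ i, Measure (α i)} [∀ i, SigmaFinite (μ i)] {f : ∀ i, α i → ℝ}
    (hf : ∀ i, Integrable (f i) (μ i)) (hf0 : ∀ i a, 0 ≤ f i a) :
    Measure.pi (fun i => (μ i).withDensity fun a => ENNReal.ofReal (f i a)) =
      (Measure.pi μ).withDensity fun u => ENNReal.ofReal (∏ i, f i (u i)) := by
  have (i : ι) : IsFiniteMeasure ((μ i).withDensity fun a => ENNReal.ofReal (f i a)) :=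
    isFiniteMeasure_withDensity_ofReal (hf i).2
  refine Measure.pi_eq fun s hs => ?_
  rw [withDensity_apply _ (MeasurableSet.univ_pi hs), Measure.restrict_pi_pi,
    ← ofReal_integral_eq_lintegral_ofReal (Integrable.fintype_prod_dep fun i => (hf i).restrict)
      (ae_of_all _ fun u => Finset.prod_nonneg fun i _ => hf0 i (u i)),
    integral_fintype_prod_eq_prod,
    ENNReal.ofReal_prod_of_nonneg fun i _ => integral_nonneg (hf0 i)]
  refine Finset.prod_congr rfl fun i _ => ?_
  rw [withDensity_apply _ (hs i),
    ofReal_integral_eq_lintegral_ofReal (hf i).restrict (ae_of_all _ (hf0 i))]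

end Densities

section Gaussian

open ProbabilityTheory

lemma mulVec_dotProduct_inv_conj_mulVec {m R : Type*} [Fintype m] [DecidableEq m] [CommRing R]
    {L : Matrix m m R} (hL : IsUnit L.det) (M : Matrix m m R) (u : m → R) :
    L.mulVec u ⬝ᵥ (L * M * Lᵀ)⁻¹.mulVec (L.mulVec u) = u ⬝ᵥ M⁻¹.mulVec u := by
  have hinv : L⁻¹ * L = 1 := nonsing_inv_mul _ hL
  have hconj : Lᵀ * (L * M * Lᵀ)⁻¹ * L = M⁻¹ := by
    rw [Matrix.mul_inv_rev, Matrix.mul_inv_rev, ← transpose_nonsing_inv, ← Matrix.mul_assoc,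
      ← transpose_mul, hinv, transpose_one, Matrix.one_mul, Matrix.mul_assoc, hinv, Matrix.mul_one]
  rw [← hconj, ← mulVec_mulVec, ← mulVec_mulVec, mulVec_transpose L, dotProduct_comm u,
    ← dotProduct_mulVec, dotProduct_comm]

variable {n : ℕ}

/-- The density of `gauss n M` with respect to Lebesgue measure. -/
def gaussPDF (M : Matrix (Fin n) (Fin n) ℝ) (u : Fin n → ℝ) : ℝ :=
  ((2 * Real.pi) ^ n * M.det) ^ (-(1 : ℝ) / 2) * Real.exp (-(u ⬝ᵥ M⁻¹.mulVec u) / 2)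

lemma gauss_eq_withDensity_gaussPDF (M : Matrix (Fin n) (Fin n) ℝ) :
    gauss n M = volume.withDensity fun u => ENNReal.ofReal (gaussPDF M u) :=
  rfl

lemma continuous_gaussPDF (M : Matrix (Fin n) (Fin n) ℝ) : Continuous (gaussPDF M) := by
  have : Continuous fun u : Fin n → ℝ => u ⬝ᵥ M⁻¹.mulVec u :=
    continuous_id.dotProduct (continuous_const.matrix_mulVec continuous_id)
  unfold gaussPDF
  fun_prop

lemma prod_gaussianPDFReal_eq_gaussPDF_one (u : Fin n → ℝ) :
    ∏ i, gaussianPDFReal 0 1 (u i) = gaussPDF 1 u := by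
  have hconst : ((√(2 * Real.pi))⁻¹) ^ n = ((2 * Real.pi) ^ n) ^ (-(1 : ℝ) / 2) := by
    rw [neg_div, Real.rpow_neg (by positivity), inv_pow, Real.sqrt_eq_rpow,
      Real.rpow_pow_comm (by positivity)]
  have hexp : ∑ i, -(u i) ^ 2 / 2 = -(u ⬝ᵥ u) / 2 := by
    simp only [dotProduct, ← Finset.sum_div, Finset.sum_neg_distrib, sq]
  simp only [gaussianPDFReal, gaussPDF, Finset.prod_mul_distrib, ← Real.exp_sum,
    Finset.prod_const, Finset.card_univ, Fintype.card_fin, NNReal.coe_one, mul_one, sub_zero,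
    det_one, inv_one, one_mulVec, hconst, hexp]

lemma pi_gaussianReal_eq_gauss_one :
    Measure.pi (fun _ : Fin n => gaussianReal 0 1) = gauss n 1 := by
  simp_rw [gaussianReal_of_var_ne_zero 0 one_ne_zero,
    gauss_eq_withDensity_gaussPDF, ← prod_gaussianPDFReal_eq_gaussPDF_one]
  exact pi_withDensity_ofReal
    (fun _ => integrable_gaussianPDFReal 0 1)
    fun _ => gaussianPDFReal_nonneg 0 1

lemma gaussPDF_mulVec {L M : Matrix (Fin n) (Fin n) ℝ} (hL : L.det ≠ 0) (hM : 0 ≤ M.det)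
    (u : Fin n → ℝ) : gaussPDF (L * M * Lᵀ) (L.mulVec u) = |L.det|⁻¹ * gaussPDF M u := by
  have hdet : (L.det ^ 2) ^ (-(1 : ℝ) / 2) = |L.det|⁻¹ := by
    rw [neg_div, Real.rpow_neg (sq_nonneg _), ← Real.sqrt_eq_rpow, Real.sqrt_sq_eq_abs]
  have hfactor : (2 * Real.pi) ^ n * (L * M * Lᵀ).det =
      L.det ^ 2 * ((2 * Real.pi) ^ n * M.det) := by
    rw [det_mul, det_mul, det_transpose]
    ring
  rw [gaussPDF, gaussPDF, mulVec_dotProduct_inv_conj_mulVec hL.isUnit, hfactor,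
    Real.mul_rpow (sq_nonneg _) (by positivity), hdet, mul_assoc]

lemma map_mulVec_gauss {L M : Matrix (Fin n) (Fin n) ℝ} (hL : L.det ≠ 0) (hM : 0 ≤ M.det) :
    (gauss n M).map L.mulVec = gauss n (L * M * Lᵀ) := by
  have hmulVec : Measurable L.mulVec := (continuous_const.matrix_mulVec continuous_id).measurable
  set g : (Fin n → ℝ) → ℝ≥0∞ := fun v => ENNReal.ofReal (gaussPDF (L * M * Lᵀ) v)
  have hg : Measurable g := (continuous_gaussPDF _).measurable.ennreal_ofReal
  have hdensity : (fun u => ENNReal.ofReal (gaussPDF M u)) =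
      ENNReal.ofReal |L.det| • (g ∘ L.mulVec) := by
    ext u
    simp only [g, Pi.smul_apply, Function.comp_apply, smul_eq_mul, gaussPDF_mulVec hL hM]
    rw [← ENNReal.ofReal_mul (abs_nonneg _), mul_inv_cancel_left₀ (abs_ne_zero.2 hL)]
  have hvolume : (volume : Measure (Fin n → ℝ)).map L.mulVec =
      ENNReal.ofReal |L.det|⁻¹ • volume := by
    rw [← abs_inv]
    exact Real.map_matrix_volume_pi_eq_smul_volume_pi hL
  rw [gauss_eq_withDensity_gaussPDF, hdensity, withDensity_smul _ (hg.comp hmulVec),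
    Measure.map_smul, map_withDensity_comp _ hmulVec hg, hvolume, withDensity_smul_measure,
    smul_smul, ← ENNReal.ofReal_mul (abs_nonneg _), mul_inv_cancel₀ (abs_ne_zero.2 hL),
    ENNReal.ofReal_one, one_smul]
  rfl

end Gaussian

section GaussianSequence

open InnerProductSpace ProbabilityTheory
open scoped RealInnerProductSpace

variable {E : Type*} [NormedAddCommGroup E] [InnerProductSpace ℝ E]

section GramSchmidt

variable {ι : Type*} [LinearOrder ι] [LocallyFiniteOrderBot ι] [WellFoundedLT ι]

lemma inner_gramSchmidtNormed_of_lt (v : ι → E) {k i : ι} (hki : k < i) :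
    ⟪gramSchmidtNormed ℝ v i, v k⟫ = 0 := by
  rw [gramSchmidtNormed, real_inner_smul_left, gramSchmidt_inv_triangular ℝ v hki, mul_zero]

lemma inner_gramSchmidtNormed_smul_gramSchmidtNormed (v : ι → E) (i : ι) (w : E) :
    ⟪gramSchmidtNormed ℝ v i, w⟫ • gramSchmidtNormed ℝ v i =
      (ℝ ∙ gramSchmidt ℝ v i).starProjection w := by
  rw [Submodule.starProjection_singleton, gramSchmidtNormed, real_inner_smul_left, smul_smul]
  congr 1
  simp only [RCLike.ofReal_real_eq_id, id_eq]
  ring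

lemma starProjection_gramSchmidt_self (v : ι → E) (k : ι) :
    (ℝ ∙ gramSchmidt ℝ v k).starProjection (v k) = gramSchmidt ℝ v k := by
  have hsub : v k - gramSchmidt ℝ v k =
      ∑ i ∈ Finset.Iio k, (ℝ ∙ gramSchmidt ℝ v i).starProjection (v k) :=
    sub_eq_iff_eq_add'.2 (gramSchmidt_def' ℝ v k)
  have hmem : gramSchmidt ℝ v k ∈ ℝ ∙ gramSchmidt ℝ v k := Submodule.mem_span_singleton_self _
  have horth : v k - gramSchmidt ℝ v k ∈ (ℝ ∙ gramSchmidt ℝ v k)ᗮ := by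
    rw [Submodule.mem_orthogonal_singleton_iff_inner_right, hsub, inner_sum]
    refine Finset.sum_eq_zero fun i hi => ?_
    rw [Submodule.starProjection_singleton, inner_smul_right,
      gramSchmidt_orthogonal ℝ v (Finset.mem_Iio.1 hi).ne', mul_zero]
  exact Submodule.eq_starProjection_of_mem_orthogonal hmem horth

lemma sum_Iic_inner_gramSchmidtNormed_smul (v : ι → E) (k : ι) :
    ∑ i ∈ Finset.Iic k, ⟪gramSchmidtNormed ℝ v i, v k⟫ • gramSchmidtNormed ℝ v i = v k := by
  rw [← Finset.Iio_insert, Finset.sum_insert Finset.notMem_Iio_self]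
  simp only [inner_gramSchmidtNormed_smul_gramSchmidtNormed, starProjection_gramSchmidt_self]
  exact (gramSchmidt_def' ℝ v k).symm

end GramSchmidt

/-- The lower triangular matrix of the coordinates of `v 0, …, v (n - 1)` in the orthonormalisation
of `v`: the Cholesky factor of their Gram matrix. -/
def choleskyFactor (v : ℕ → E) (n : ℕ) : Matrix (Fin n) (Fin n) ℝ :=
  Matrix.of fun j i => ⟪gramSchmidtNormed ℝ v i, v j⟫

lemma choleskyFactor_mulVec_truncate (v : ℕ → E) (n : ℕ) (ξ : ℕ → ℝ) :
    (choleskyFactor v n).mulVec (truncate n ξ) =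
      truncate n fun k => ∑ i ∈ Finset.Iic k, ⟪gramSchmidtNormed ℝ v i, v k⟫ * ξ i := by
  ext k
  calc ∑ i : Fin n, ⟪gramSchmidtNormed ℝ v i, v k⟫ * ξ i
      = ∑ i ∈ Finset.range n, ⟪gramSchmidtNormed ℝ v i, v k⟫ * ξ i :=
        (Finset.sum_range fun i => ⟪gramSchmidtNormed ℝ v i, v k⟫ * ξ i).symm
    _ = ∑ i ∈ Finset.Iic (k : ℕ), ⟪gramSchmidtNormed ℝ v i, v k⟫ * ξ i := by
        refine (Finset.sum_subset (fun i hi => ?_) fun i _ hi => ?_).symm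
        · exact Finset.mem_range.2 ((Finset.mem_Iic.1 hi).trans_lt k.2)
        · rw [inner_gramSchmidtNormed_of_lt v (by simpa using hi), zero_mul]

lemma choleskyFactor_mul_transpose (v : ℕ → E) (n : ℕ) :
    choleskyFactor v n * (choleskyFactor v n)ᵀ = gram ℝ fun i : Fin n => v i := by
  ext j k
  calc ((choleskyFactor v n).mulVec (truncate n fun i => ⟪gramSchmidtNormed ℝ v i, v k⟫)) j
      = ∑ i ∈ Finset.Iic (j : ℕ),
          ⟪gramSchmidtNormed ℝ v i, v j⟫ * ⟪gramSchmidtNormed ℝ v i, v k⟫ :=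
        congrFun (choleskyFactor_mulVec_truncate v n _) j
    _ = ⟪∑ i ∈ Finset.Iic (j : ℕ),
          ⟪gramSchmidtNormed ℝ v i, v j⟫ • gramSchmidtNormed ℝ v i, v k⟫ := by
        simp only [sum_inner, real_inner_smul_left]
    _ = ⟪v j, v k⟫ := by rw [sum_Iic_inner_gramSchmidtNormed_smul]

lemma det_choleskyFactor_ne_zero {v : ℕ → E} (hv : LinearIndependent ℝ v) (n : ℕ) :
    (choleskyFactor v n).det ≠ 0 := by
  have hgram : (gram ℝ fun i : Fin n => v i).det ≠ 0 :=
    det_gram_ne_zero_iff_linearIndependent.2 (hv.comp _ Fin.val_injective)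
  rw [← choleskyFactor_mul_transpose, det_mul] at hgram
  exact left_ne_zero_of_mul hgram

/-- The law of a centred Gaussian sequence with covariances `⟪v j, v k⟫`, realised as
`X k = ∑ i ≤ k, ⟪e i, v k⟫ * ξ i` with `e` the orthonormalisation of `v` and `ξ` a sequence of
independent standard Gaussian variables. -/
def gaussianSequenceLaw (v : ℕ → E) : Measure (ℕ → ℝ) :=
  (Measure.infinitePi fun _ : ℕ => gaussianReal 0 1).map
    fun ξ k => ∑ i ∈ Finset.Iic k, ⟪gramSchmidtNormed ℝ v i, v k⟫ * ξ i

instance (v : ℕ → E) : IsFiniteMeasure (gaussianSequenceLaw v) :=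
  Measure.isFiniteMeasure_map _ _

lemma map_truncate_gaussianSequenceLaw {v : ℕ → E} (hv : LinearIndependent ℝ v) (n : ℕ) :
    (gaussianSequenceLaw v).map (truncate n) = gauss n (gram ℝ fun i : Fin n => v i) := by
  have htrunc : Measurable (truncate n : (ℕ → ℝ) → Fin n → ℝ) := (continuous_truncate n).measurable
  have hmulVec : Measurable (choleskyFactor v n).mulVec :=
    (continuous_const.matrix_mulVec continuous_id).measurable
  have hstd : (Measure.infinitePi fun _ : ℕ => gaussianReal 0 1).map
      (truncate n) = gauss n 1 := by
    rw [← pi_gaussianReal_eq_gauss_one, ← Measure.infinitePi_eq_pi]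
    exact Measure.map_infinitePi_infinitePi_of_inj Fin.val_injective
  calc (gaussianSequenceLaw v).map (truncate n)
      = (Measure.infinitePi fun _ : ℕ => gaussianReal 0 1).map
          ((choleskyFactor v n).mulVec ∘ truncate n) := by
        rw [gaussianSequenceLaw, Measure.map_map htrunc (by fun_prop)]
        congr 1 with ξ : 1
        exact (choleskyFactor_mulVec_truncate v n ξ).symm
    _ = (gauss n 1).map (choleskyFactor v n).mulVec := by
        rw [← Measure.map_map hmulVec htrunc, hstd]
    _ = gauss n (gram ℝ fun i : Fin n => v i) := by
        rw [map_mulVec_gauss (det_choleskyFactor_ne_zero hv n) (by simp), Matrix.mul_one,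
          choleskyFactor_mul_transpose]

end GaussianSequence

section BrownianCovariance

open scoped RealInnerProductSpace

/-- The indicator function of `(0, s]` in `L²(ℝ)`. -/
def indicatorIoc (s : ℝ) : Lp ℝ 2 (volume : Measure ℝ) :=
  indicatorConstLp 2 (measurableSet_Ioc (a := 0) (b := s)) measure_Ioc_lt_top.ne 1

lemma inner_indicatorIoc {s r : ℝ} (hs : 0 ≤ s) (hr : 0 ≤ r) :
    ⟪indicatorIoc s, indicatorIoc r⟫ = min s r := by
  rw [indicatorIoc, indicatorIoc, L2.real_inner_indicatorConstLp_one_indicatorConstLp_one _ _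
    measure_Ioc_lt_top.ne measure_Ioc_lt_top.ne, Ioc_inter_Ioc]
  simp [hs, hr]

lemma two_mul_min_sub_min_add_sub_min_sub {h : ℝ} (hh : 0 ≤ h) (s r : ℝ) :
    2 * min s r - min (s + h) r - min (s - h) r = max (h - |s - r|) 0 := by
  grind

/-- The `L²` representative of the second difference of Brownian motion at `s` with step `h`; its
pairing with `indicatorIoc` is a hat function centred at `s`. -/
def secondDifference (s h : ℝ) : Lp ℝ 2 (volume : Measure ℝ) :=
  (2 : ℝ) • indicatorIoc s - indicatorIoc (s + h) - indicatorIoc (s - h)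

lemma inner_secondDifference_indicatorIoc {s h r : ℝ} (hh : 0 ≤ h) (hhs : h ≤ s) (hr : 0 ≤ r) :
    ⟪secondDifference s h, indicatorIoc r⟫ = max (h - |s - r|) 0 := by
  rw [secondDifference, inner_sub_left, inner_sub_left, real_inner_smul_left,
    inner_indicatorIoc (hh.trans hhs) hr, inner_indicatorIoc (by linarith) hr,
    inner_indicatorIoc (by linarith) hr, two_mul_min_sub_min_add_sub_min_sub hh]

lemma exists_pos_forall_le_abs_sub {ι : Type*} {t : ι → ℝ} (ht : Function.Injective t)
    (S : Finset ι) (k : ι) : ∃ ε > 0, ∀ j ∈ S, j ≠ k → ε ≤ |t k - t j| := by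
  classical
  have hopen : IsOpen (t '' (S.erase k : Set ι))ᶜ :=
    ((S.erase k).finite_toSet.image t).isClosed.isOpen_compl
  have hmem : t k ∈ (t '' (S.erase k : Set ι))ᶜ := by
    simp [ht.eq_iff]
  obtain ⟨ε, hε, hball⟩ := Metric.isOpen_iff.1 hopen _ hmem
  refine ⟨ε, hε, fun j hj hjk => ?_⟩
  by_contra! hlt
  refine hball (?_ : t j ∈ _) ⟨j, by simp [hj, hjk], rfl⟩
  rwa [Metric.mem_ball', Real.dist_eq]

-- Pairing a linear relation with a narrow hat function at `t k` isolates the `k`-th coefficient.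
lemma linearIndependent_indicatorIoc {ι : Type*} {t : ι → ℝ} (htpos : ∀ k, 0 < t k)
    (htinj : Function.Injective t) : LinearIndependent ℝ fun k => indicatorIoc (t k) := by
  refine linearIndependent_iff'.2 fun S c hc k hk => ?_
  obtain ⟨ε, hε, hsep⟩ := exists_pos_forall_le_abs_sub htinj S k
  set h := min ε (t k)
  have hh : 0 < h := lt_min hε (htpos k)
  have hinner (j : ι) : ⟪secondDifference (t k) h, indicatorIoc (t j)⟫ = max (h - |t k - t j|) 0 :=
    inner_secondDifference_indicatorIoc hh.le (min_le_right _ _) (htpos j).le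
  have hsum : ∑ j ∈ S, c j * max (h - |t k - t j|) 0 = 0 := by
    simpa only [inner_sum, real_inner_smul_right, hinner, inner_zero_right] using
      congrArg (fun w => ⟪secondDifference (t k) h, w⟫) hc
  have hother : ∀ j ∈ S, j ≠ k → c j * max (h - |t k - t j|) 0 = 0 := fun j hj hjk => by
    have : h ≤ |t k - t j| := (min_le_left _ _).trans (hsep j hj hjk)
    rw [max_eq_right (by linarith), mul_zero]
  rw [Finset.sum_eq_single_of_mem k hk hother, sub_self, abs_zero, sub_zero,
    max_eq_left hh.le] at hsum
  exact (mul_eq_zero.1 hsum).resolve_right hh.ne'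

lemma gram_indicatorIoc_eq_covM {t : ℕ → ℝ} (ht : ∀ k, 0 ≤ t k) (n : ℕ) :
    (gram ℝ fun i : Fin n => indicatorIoc (t i)) = covM t n := by
  ext j k
  exact inner_indicatorIoc (ht j) (ht k)

end BrownianCovariance

section Wiener

variable (t : ℕ → ℝ) (ht : ∀ k, t k ∈ Set.Ioc (0 : ℝ) 1)

/-- The values of a path at the times `t 0, t 1, …`. -/
def sample (x : Cz) : ℕ → ℝ :=
  fun k => (x : C(Set.Icc (0 : ℝ) 1, ℝ)) ⟨t k, Set.Ioc_subset_Icc_self (ht k)⟩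

lemma truncate_comp_sample (n : ℕ) : truncate n ∘ sample t ht = proj t ht n :=
  rfl

lemma continuous_sample : Continuous (sample t ht) :=
  continuous_pi fun _ => (continuous_eval_const _).comp continuous_subtype_val

instance : PolishSpace Cz :=
  (isClosed_eq (continuous_eval_const _) continuous_const).polishSpace

/-- The law of Brownian motion at the times `t 0, t 1, …`, as a measure on sequences. -/
def brownianSequenceLaw : Measure (ℕ → ℝ) :=
  gaussianSequenceLaw fun k => indicatorIoc (t k)

instance : IsFiniteMeasure (brownianSequenceLaw t) :=
  inferInstanceAs (IsFiniteMeasure (gaussianSequenceLaw _))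

/-- The pullback to `Cz` of the law of Brownian motion at the times `t 0, t 1, …`. -/
def wienerMeasure : Measure Cz :=
  (brownianSequenceLaw t).comap (sample t ht)

variable {t ht}

lemma injective_sample (htdense : Set.Icc (0 : ℝ) 1 ⊆ closure (Set.range t)) :
    Function.Injective (sample t ht) := by
  intro x y hxy
  have hdense : DenseRange fun k =>
      (⟨t k, Set.Ioc_subset_Icc_self (ht k)⟩ : Set.Icc (0 : ℝ) 1) := by
    intro s
    rw [closure_subtype, ← range_comp]
    exact htdense s.2
  exact Subtype.ext <| DFunLike.coe_injective <|
    hdense.equalizer (map_continuous x.1) (map_continuous y.1) hxy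

lemma measurableEmbedding_sample (htdense : Set.Icc (0 : ℝ) 1 ⊆ closure (Set.range t)) :
    MeasurableEmbedding (sample t ht) :=
  (continuous_sample t ht).measurableEmbedding (injective_sample htdense)

lemma map_truncate_brownianSequenceLaw (htpos : ∀ k, 0 < t k) (htinj : Function.Injective t)
    (n : ℕ) : (brownianSequenceLaw t).map (truncate n) = gauss n (covM t n) := by
  rw [brownianSequenceLaw,
    map_truncate_gaussianSequenceLaw (linearIndependent_indicatorIoc htpos htinj),
    gram_indicatorIoc_eq_covM fun k => (htpos k).le]

lemma phi_eq_brownianSequenceLaw_image (htinj : Function.Injective t) {K : Set Cz}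
    (hK : IsCompact K) : phi t ht K = brownianSequenceLaw t (sample t ht '' K) := by
  rw [← iInf_map_truncate_image_of_isCompact _ (hK.image (continuous_sample t ht))]
  refine iInf_congr fun n => ?_
  rw [map_truncate_brownianSequenceLaw (fun k => (ht k).1) htinj, ← image_comp,
    truncate_comp_sample]

lemma wienerMeasure_apply (htdense : Set.Icc (0 : ℝ) 1 ⊆ closure (Set.range t)) (A : Set Cz) :
    wienerMeasure t ht A = brownianSequenceLaw t (sample t ht '' A) :=
  (measurableEmbedding_sample htdense).comap_apply _ A

lemma mu_eq_wienerMeasure (htinj : Function.Injective t)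
    (htdense : Set.Icc (0 : ℝ) 1 ⊆ closure (Set.range t)) {A : Set Cz} (hA : MeasurableSet A) :
    mu t ht A = wienerMeasure t ht A := by
  have : IsFiniteMeasure (wienerMeasure t ht) :=
    ⟨by rw [wienerMeasure_apply htdense]; exact measure_lt_top _ _⟩
  rw [hA.measure_eq_iSup_isCompact]
  refine iSup_congr fun K => iSup_congr fun _ => iSup_congr fun hK => ?_
  rw [phi_eq_brownianSequenceLaw_image htinj hK, wienerMeasure_apply htdense]

end Wiener

/-- `μ` is additive on disjoint Borel sets. -/
theorem stmt8 (t : ℕ → ℝ) (ht : ∀ k, t k ∈ Set.Ioc (0:ℝ) 1)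
    (htinj : Function.Injective t)
    (htdense : Set.Icc (0:ℝ) 1 ⊆ closure (Set.range t))
    (A B : Set Cz) (hA : MeasurableSet A) (hB : MeasurableSet B)
    (hdisj : Disjoint A B) :
    mu t ht (A ∪ B) = mu t ht A + mu t ht B := by
  rw [mu_eq_wienerMeasure htinj htdense (hA.union hB), mu_eq_wienerMeasure htinj htdense hA,
    mu_eq_wienerMeasure htinj htdense hB, measure_union hdisj hB]

end
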